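/- arXiv:1310.4581 — 4 statements merged into one kernel-verified Lean document; each statement's English description precedes it below -/
import Mathlib

section
/- Stability of classical Rényi 2-extractors against quantum side information: let N, M be finite sets, D ≥ 1, k ∈ ℝ, ε > 0, and let f_1, …, f_D : N → M be functions forming a strong (k, ε) Rényi 2-extractor, i.e., for every function P : N → [0, ∞) with ∑_{x∈N} P(x)² ≤ 2^{−k} it holds that (1/D²) ∑_{i=1}^{D} ∑_{m∈M} (∑_{x : f_i(x)=m} P(x))² ≤ (ε+1)/(|M|·D). Then for every classical-quantum positive semidefinite operator ρ_{NR} = ∑_{x∈N} |x⟩⟨x| ⊗ ρ_R^x on C^N ⊗ H_R (each ρ_R^x positive semidefinite) satisfying ∑_{x∈N} Tr[ρ_R^x ρ_R^{−1/2} ρ_R^x ρ_R^{−1/2}] ≤ 2^{−k}, where ρ_R = ∑_{x∈N} ρ_R^x, it holds that (1/D²) ∑_{i=1}^{D} ∑_{m∈M} Tr[σ_R^{i,m} ρ_R^{−1/2} σ_R^{i,m} ρ_R^{−1/2}] ≤ (ε+1)/(|M|·D), where σ_R^{i,m} = ∑_{x : f_i(x)=m} ρ_R^x. (In entropy language: H₂(N|R)_ρ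 ≥ k implies H₂(MD|R)_σ ≥ log(|M|·D/(ε+1)) for the extractor output σ_{MDR} = (1/D) ∑_i ρ_{f_i(N)R} ⊗ |i⟩⟨i|.) -/
open scoped Kronecker ComplexOrder
open Matrix

noncomputable section

/-- Generalized inverse square root of a Hermitian matrix: it vanishes on the kernel and acts
as `λ^{-1/2}` on each eigenspace with eigenvalue `λ > 0` (junk value `0` otherwise). -/
def invSqrt {n : Type*} [Fintype n] [DecidableEq n] (A : Matrix n n ℂ) : Matrix n n ℂ :=
  if hA : A.IsHermitian then
    (hA.eigenvectorUnitary : Matrix n n ℂ) *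
      Matrix.diagonal (fun i => (Real.sqrt (hA.eigenvalues i)⁻¹ : ℂ)) *
      ((hA.eigenvectorUnitary : Matrix n n ℂ))ᴴ
  else 0

open scoped Matrix.Norms.Frobenius in
theorem frob_sq_eq {n : Type*} [Fintype n] [DecidableEq n] (B : Matrix n n ℂ) :
    (Matrix.trace (Bᴴ * B)).re = ‖B‖ ^ 2 := by
  rw [Matrix.frobenius_norm_def, ← Real.sqrt_eq_rpow, Real.sq_sqrt (by positivity)]
  simp only [Matrix.trace, Matrix.diag_apply, Matrix.mul_apply, Matrix.conjTranspose_apply,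
    Complex.re_sum]
  rw [Finset.sum_comm]
  refine Finset.sum_congr rfl fun i _ => Finset.sum_congr rfl fun j _ => ?_
  have h : ‖B i j‖ ^ (2 : ℝ) = ‖B i j‖ ^ 2 := by norm_cast
  rw [h, Complex.sq_norm, Complex.normSq_apply]
  simp

theorem invSqrt_posSemidef {n : Type*} [Fintype n] [DecidableEq n] (A : Matrix n n ℂ) :
    (invSqrt A).PosSemidef := by
  unfold invSqrt
  split_ifs with hA
  · apply Matrix.PosSemidef.mul_mul_conjTranspose_same
    apply Matrix.PosSemidef.diagonal
    intro i
    simp only [Pi.zero_apply]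
    exact_mod_cast Real.sqrt_nonneg _
  · exact Matrix.PosSemidef.zero

open scoped MatrixOrder in
theorem invSqrt_factor {n : Type*} [Fintype n] [DecidableEq n] (A : Matrix n n ℂ) :
    ∃ B : Matrix n n ℂ, invSqrt A = Bᴴ * B :=
  CStarAlgebra.nonneg_iff_eq_star_mul_self.mp (invSqrt_posSemidef A).nonneg

open scoped Matrix.Norms.Frobenius in
theorem trace_eq_frob {n : Type*} [Fintype n] [DecidableEq n] (B σ : Matrix n n ℂ)
    (hσ : σ.IsHermitian) :
    (Matrix.trace (σ * (Bᴴ * B) * σ * (Bᴴ * B))).re = ‖B * σ * Bᴴ‖ ^ 2 := by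
  rw [← frob_sq_eq]
  congr 1
  have h1 : (B * σ * Bᴴ)ᴴ = B * σ * Bᴴ := by
    simp [Matrix.conjTranspose_mul, hσ.eq, Matrix.mul_assoc]
  rw [h1]
  have h2 : σ * (Bᴴ * B) * σ * (Bᴴ * B) = (σ * Bᴴ * B * σ * Bᴴ) * B := by
    simp only [Matrix.mul_assoc]
  rw [h2, Matrix.trace_mul_comm]
  simp only [Matrix.mul_assoc]

/-- **Stability of classical Rényi 2-extractors against quantum side information.**
The classical-quantum operator `ρ_{NR} = Σ_x |x⟩⟨x| ⊗ ρ x` is described by its blocks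
`ρ x`, and `H₂(N|R)_ρ ≥ k` resp. `H₂(MD|R)_σ ≥ log(|M|·D/(ε+1))` are written out via the
corresponding traces against `ρ_R^{-1/2} (·) ρ_R^{-1/2}` with `ρ_R = Σ_x ρ x`. -/
theorem renyi2_extractor_stable_qsi
    {N M : Type*} [Fintype N] [Fintype M] [DecidableEq N] [DecidableEq M]
    {R : Type*} [Fintype R] [DecidableEq R]
    (D : ℕ) (hD : 1 ≤ D) (k ε : ℝ) (hε : 0 < ε)
    (f : Fin D → N → M)
    (hext : ∀ P : N → ℝ, (∀ x, 0 ≤ P x) → (∑ x, P x ^ 2) ≤ (2 : ℝ) ^ (-k) →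
      (1 / (D : ℝ) ^ 2) *
          ∑ i, ∑ m, (∑ x ∈ Finset.univ.filter (fun x => f i x = m), P x) ^ 2 ≤
        (ε + 1) / ((Fintype.card M : ℝ) * D))
    (ρ : N → Matrix R R ℂ) (hρ : ∀ x, (ρ x).PosSemidef)
    (hcond : ∑ x, (Matrix.trace (ρ x * invSqrt (∑ x', ρ x') * ρ x *
      invSqrt (∑ x', ρ x'))).re ≤ (2 : ℝ) ^ (-k)) :
    (1 / (D : ℝ) ^ 2) *
        ∑ i, ∑ m,
          (Matrix.trace ((∑ x ∈ Finset.univ.filter (fun x => f i x = m), ρ x) *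
            invSqrt (∑ x', ρ x') *
            (∑ x ∈ Finset.univ.filter (fun x => f i x = m), ρ x) *
            invSqrt (∑ x', ρ x'))).re ≤
      (ε + 1) / ((Fintype.card M : ℝ) * D) := by
  obtain ⟨B, hB⟩ : ∃ B : Matrix R R ℂ, invSqrt (∑ x', ρ x') = Bᴴ * B :=
    invSqrt_factor _
  rw [hB] at hcond ⊢
  let _ : NormedAddCommGroup (Matrix R R ℂ) := Matrix.frobeniusNormedAddCommGroup
  have h1 : ∀ x, (Matrix.trace (ρ x * (Bᴴ * B) * ρ x * (Bᴴ * B))).re = ‖B * ρ x * Bᴴ‖ ^ 2 :=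
    fun x => trace_eq_frob B (ρ x) (hρ x).1
  simp only [h1] at hcond
  refine le_trans ?_ (hext (fun x => ‖B * ρ x * Bᴴ‖) (fun x => norm_nonneg _) hcond)
  refine mul_le_mul_of_nonneg_left ?_ (by positivity)
  refine Finset.sum_le_sum fun i _ => Finset.sum_le_sum fun m _ => ?_
  rw [trace_eq_frob B _ (Matrix.posSemidef_sum _ fun x _ => hρ x).1]
  refine pow_le_pow_left₀ (norm_nonneg _) ?_ 2
  rw [Finset.mul_sum, Finset.sum_mul]
  exact norm_sum_le _ _
end
end

section
/- The pretty good guessing probability dominates the pretty good recovery fidelity (dephasing increases conditional Rényi 2-entropy by at most log of the dimension): let ρ_AB be a state on H_A ⊗ H_B with d_A = dim H_A and ρ_B = Tr_A[ρ_AB], let {|k⟩}_{k=1}^{d_A} be any orthonormal basis of H_A, and let ρ_KB = ∑_{k=1}^{d_A} (|k⟩⟨k| ⊗ 1_B) ρ_AB (|k⟩⟨k| ⊗ 1_B). Then Tr[ρ_KB (1_A ⊗ ρ_B^{-1/2}) ρ_KB (1_A ⊗ ρ_B^{-1/2})] ≥ (1/d_A) · Tr[ρ_AB (1_A ⊗ ρ_B^{-1/2})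 ρ_AB (1_A ⊗ ρ_B^{-1/2})]; equivalently, H₂(K|B)_{ρ_KB} ≤ H₂(A|B)_{ρ_AB} + log d_A. -/
open scoped Kronecker ComplexOrder
open Matrix

noncomputable section

/-- Partial trace over the left tensor factor. -/
def ptraceLeft {α β : Type*} [Fintype α] (M : Matrix (α × β) (α × β) ℂ) : Matrix β β ℂ :=
  Matrix.of fun i j => ∑ a, M (a, i) (a, j)

/-- Rank-one projector `|v⟩⟨v|`. -/
def proj {n : Type*} (v : n → ℂ) : Matrix n n ℂ := Matrix.vecMulVec v (star v)

open scoped MatrixOrder Matrix.Norms.L2Operator in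
theorem pgg_trace_nonneg {n : Type*} [Fintype n] {M N : Matrix n n ℂ}
    (hM : M.PosSemidef) (hN : N.PosSemidef) : 0 ≤ (M * N).trace.re := by
  classical
  obtain ⟨C, rfl⟩ := CStarAlgebra.nonneg_iff_eq_star_mul_self.mp hM.nonneg
  rw [Matrix.star_eq_conjTranspose]
  rw [Matrix.mul_assoc, Matrix.trace_mul_comm]
  exact (Complex.le_def.1 (hN.mul_mul_conjTranspose_same C).trace_nonneg).1

theorem pgg_invSqrt_herm {n : Type*} [Fintype n] [DecidableEq n] (M : Matrix n n ℂ) :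
    (invSqrt M)ᴴ = invSqrt M := by
  unfold invSqrt
  split_ifs with h
  · rw [Matrix.conjTranspose_mul, Matrix.conjTranspose_mul, Matrix.diagonal_conjTranspose,
      Matrix.conjTranspose_conjTranspose, Matrix.mul_assoc]
    congr 3
    ext i
    simp
  · simp

theorem pgg_core {A n : Type*} [Fintype A] [DecidableEq A] [Fintype n] [DecidableEq n]
    (ρ W : Matrix n n ℂ) (hρ : ρ.PosSemidef) (hW : Wᴴ = W) (Q : A → Matrix n n ℂ)
    (hQ : ∀ k, (Q k)ᴴ = Q k) (hQQ : ∀ k l, Q k * Q l = if k = l then Q k else 0)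
    (hsum : ∑ k, Q k = 1) (hcomm : ∀ k, Q k * W = W * Q k) :
    (ρ * W * ρ * W).trace.re ≤ (Fintype.card A : ℝ) *
      ((∑ k, Q k * ρ * Q k) * W * (∑ k, Q k * ρ * Q k) * W).trace.re := by
  set R := ∑ k, Q k * ρ * Q k with hR
  have h1 : ∑ k, ∑ l, (Q k - Q l) * ρ * (Q k - Q l)
      = (2 : ℂ) • ((Fintype.card A : ℂ) • R - ρ) := by
    have e : ∀ k l, (Q k - Q l) * ρ * (Q k - Q l) =
      Q k * ρ * Q k + Q l * ρ * Q l - Q k * ρ * Q l - Q l * ρ * Q k := by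
      intro k l; noncomm_ring
    have c1 : ∑ k, ∑ l, Q k * ρ * Q l = ρ := by
      simp_rw [← Finset.mul_sum, hsum, mul_one, ← Finset.sum_mul, hsum, one_mul]
    have c2 : ∑ k, ∑ l, Q l * ρ * Q k = ρ := by
      rw [Finset.sum_comm, c1]
    simp only [e, Finset.sum_sub_distrib, Finset.sum_add_distrib, c1, c2, ← hR,
      Finset.sum_const, Finset.card_univ, ← Finset.smul_sum]
    simp only [← Nat.cast_smul_eq_nsmul ℂ]
    module
  have h2 : 0 ≤ (ρ * (W * ((2 : ℂ) • ((Fintype.card A : ℂ) • R - ρ)) * W)).trace.re := by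
    rw [← h1]
    apply pgg_trace_nonneg hρ
    have : (∑ k, ∑ l, (Q k - Q l) * ρ * (Q k - Q l)).PosSemidef := by
      refine Matrix.posSemidef_sum _ fun k _ => Matrix.posSemidef_sum _ fun l _ => ?_
      have := hρ.mul_mul_conjTranspose_same (Q k - Q l)
      rwa [Matrix.conjTranspose_sub, hQ, hQ] at this
    have := this.mul_mul_conjTranspose_same W
    rwa [hW] at this
  have h3 : (R * W * R * W).trace = (ρ * W * R * W).trace := by
    have hRQ : ∀ k, R * Q k = Q k * ρ * Q k := by
      intro k
      rw [hR, Finset.sum_mul]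
      simp [Matrix.mul_assoc, hQQ]
    have hQR : ∀ k, Q k * R = Q k * ρ * Q k := by
      intro k
      rw [hR, Finset.mul_sum]
      simp [← Matrix.mul_assoc, hQQ]
    have hX : ∀ k, Q k * (W * R * W) = (W * R * W) * Q k := by
      intro k
      have : Q k * R = R * Q k := by rw [hRQ, hQR]
      simp only [← Matrix.mul_assoc]
      rw [hcomm, Matrix.mul_assoc W (Q k) R, this]
      simp only [Matrix.mul_assoc]
      rw [hcomm]
    have hY : ∀ k, (Q k * ρ * Q k * (W * R * W)).trace = (ρ * (W * R * W) * Q k).trace := by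
      intro k
      rw [Matrix.mul_assoc, hX, Matrix.mul_assoc, Matrix.trace_mul_comm, Matrix.mul_assoc,
        Matrix.mul_assoc, hQQ, if_pos rfl]
      simp only [Matrix.mul_assoc]
    have : (R * (W * R * W)).trace = (ρ * (W * R * W)).trace := by
      conv_lhs => rw [hR, Finset.sum_mul, Matrix.trace_sum]
      rw [Finset.sum_congr rfl fun k _ => hY k, ← Matrix.trace_sum, ← Finset.mul_sum, hsum, mul_one]
    simpa only [Matrix.mul_assoc] using this
  rw [h3]
  have h4 : (ρ * (W * ((2 : ℂ) • ((Fintype.card A : ℂ) • R - ρ)) * W)).trace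
      = 2 * ((Fintype.card A : ℂ) * (ρ * W * R * W).trace - (ρ * W * ρ * W).trace) := by
    simp [Matrix.mul_sub, Matrix.sub_mul, Matrix.mul_assoc, Matrix.trace_sub]
  rw [h4] at h2
  simp at h2
  linarith

/-- **The pretty good guessing probability dominates the pretty good recovery fidelity**
(dephasing in any orthonormal basis increases the conditional Rényi 2-entropy by at most
the log of the dimension), in trace form:
`Tr[ρ_KB (1⊗ρ_B^{-1/2}) ρ_KB (1⊗ρ_B^{-1/2})] ≥ (1/d_A)·Tr[ρ_AB (1⊗ρ_B^{-1/2}) ρ_AB (1⊗ρ_B^{-1/2})]`. -/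
theorem pretty_good_guessing_dominates_recovery
    {A B : Type*} [Fintype A] [Fintype B] [DecidableEq A] [DecidableEq B]
    (ρ : Matrix (A × B) (A × B) ℂ) (hρ : ρ.PosSemidef) (hρtr : ρ.trace = 1)
    (b : A → A → ℂ)
    (horth : ∀ k k', (∑ x, (starRingEnd ℂ) (b k x) * b k' x) = if k = k' then 1 else 0)
    (ρK : Matrix (A × B) (A × B) ℂ)
    (hρK : ρK = ∑ k, (proj (b k) ⊗ₖ (1 : Matrix B B ℂ)) * ρ *
      (proj (b k) ⊗ₖ (1 : Matrix B B ℂ))) :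
    (1 / (Fintype.card A : ℝ)) *
        (Matrix.trace (ρ * ((1 : Matrix A A ℂ) ⊗ₖ invSqrt (ptraceLeft ρ)) * ρ *
          ((1 : Matrix A A ℂ) ⊗ₖ invSqrt (ptraceLeft ρ)))).re ≤
      (Matrix.trace (ρK * ((1 : Matrix A A ℂ) ⊗ₖ invSqrt (ptraceLeft ρ)) * ρK *
        ((1 : Matrix A A ℂ) ⊗ₖ invSqrt (ptraceLeft ρ)))).re := by
  have hA : (0 : ℝ) < Fintype.card A := by
    rcases isEmpty_or_nonempty A with h | h
    · simp [Matrix.trace] at hρtr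
    · exact_mod_cast Fintype.card_pos
  have hPsum : ∑ k, proj (b k) = (1 : Matrix A A ℂ) := by
    have hU : (Matrix.of fun k x => star (b k x)) * (Matrix.of fun x k => b k x)
        = (1 : Matrix A A ℂ) := by
      ext k k'
      simpa [Matrix.mul_apply, Matrix.one_apply] using horth k k'
    rw [_root_.mul_eq_one_comm] at hU
    rw [← hU]
    ext x y
    simp [Matrix.mul_apply, Matrix.sum_apply, proj, Matrix.vecMulVec_apply]
  have hPP : ∀ k l, proj (b k) * proj (b l) = if k = l then proj (b k) else 0 := by
    intro k l
    have h : star (b k) ⬝ᵥ b l = if k = l then 1 else 0 := horth k l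
    rw [proj, proj, Matrix.vecMulVec_mul_vecMulVec, h]
    split_ifs with e
    · simp [e]
    · ext; simp [Matrix.vecMulVec_apply]
  have key := pgg_core ρ ((1 : Matrix A A ℂ) ⊗ₖ invSqrt (ptraceLeft ρ)) hρ
    (by rw [Matrix.conjTranspose_kronecker, pgg_invSqrt_herm, Matrix.conjTranspose_one])
    (fun k => proj (b k) ⊗ₖ (1 : Matrix B B ℂ))
    (by
      intro k
      simp only [Matrix.conjTranspose_kronecker, Matrix.conjTranspose_one]
      congr 1
      ext x y
      simp [proj, Matrix.vecMulVec_apply, mul_comm])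
    (by
      intro k l
      simp only [← Matrix.mul_kronecker_mul, hPP, mul_one]
      split_ifs <;> simp)
    (by
      ext ⟨x, i⟩ ⟨y, j⟩
      have h := congrFun (congrFun hPsum x) y
      rw [Matrix.sum_apply] at h
      simp only [Matrix.sum_apply, Matrix.kronecker_apply]
      rw [← Finset.sum_mul, h, ← Matrix.kronecker_apply, Matrix.one_kronecker_one])
    (by
      intro k
      simp only [← Matrix.mul_kronecker_mul, mul_one, one_mul])
  rw [← hρK] at key
  rw [one_div, inv_mul_le_iff₀ hA]
  exact key
end
end

section
/- Unitary 2-designs are quantum Rényi 2-extractors: let {U_1, …, U_L} be a unitary 2-design on C^N, and fix a tensor decomposition C^N = C^M ⊗ C^{M'} (so N = M·M'). Then for every positive semidefinite operator ρ on C^N: (1/L) ∑_{i=1}^{L} Tr[ (Tr_{M'}[U_i ρ U_i†])² ] ≤ (Tr ρ)²/M + (M/N) · Tr[ρ²]. In particular, a unitary 2-design is a strong (k, ε)-quantum Rényi 2-extractor with output size m = (n + k)/2 − (1/2) log(1/ε), where n = log N and M = 2^m. -/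
open scoped Kronecker ComplexOrder
open Matrix MeasureTheory

noncomputable section

instance matrixMeasurableSpace {ι κ : Type*} : MeasurableSpace (Matrix ι κ ℂ) :=
  inferInstanceAs (MeasurableSpace (ι → κ → ℂ))

/-- A finite family of unitaries on `ℂ^ι` is a unitary 2-design if the average of
`(U_i ⊗ U_i) M (U_i ⊗ U_i)†` over the family coincides (entrywise) with the corresponding
integral over the full unitary group with respect to the Haar probability measure.  The
Haar probability measure is characterized as a left-invariant (Borel) probability measure
on the compact group `U(ι)` — on this group such a measure is unique, so we quantify over
all of them. -/
def IsUnitaryTwoDesign {ι : Type*} [Fintype ι] [DecidableEq ι] {L : ℕ}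
    (U : Fin L → Matrix ι ι ℂ) : Prop :=
  (∀ i, U i ∈ Matrix.unitaryGroup ι ℂ) ∧
    ∀ μ : Measure (Matrix.unitaryGroup ι ℂ),
      IsProbabilityMeasure μ → μ.IsMulLeftInvariant →
      ∀ M : Matrix (ι × ι) (ι × ι) ℂ, ∀ a b : ι × ι,
        ((L : ℂ))⁻¹ * (∑ i, (U i ⊗ₖ U i) * M * ((U i) ⊗ₖ (U i))ᴴ) a b =
          ∫ V : Matrix.unitaryGroup ι ℂ,
            ((((V : Matrix ι ι ℂ) ⊗ₖ (V : Matrix ι ι ℂ)) * M *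
              (((V : Matrix ι ι ℂ) ⊗ₖ (V : Matrix ι ι ℂ)))ᴴ) a b) ∂μ

/-- Partial trace over the right tensor factor. -/
def ptraceRight {α β : Type*} [Fintype β] (M : Matrix (α × β) (α × β) ℂ) : Matrix α α ℂ :=
  Matrix.of fun i j => ∑ b, M (i, b) (j, b)

section Helpers

variable {ι : Type*} [Fintype ι] [DecidableEq ι]

theorem borelMat : BorelSpace (Matrix ι ι ℂ) := inferInstanceAs (BorelSpace (ι → ι → ℂ))

theorem borelUnitary : BorelSpace (Matrix.unitaryGroup ι ℂ) :=
  have := borelMat (ι := ι)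
  Subtype.borelSpace _

theorem compactUnitary : CompactSpace (Matrix.unitaryGroup ι ℂ) := by
  have hc : IsClosed ((Matrix.unitaryGroup ι ℂ : Submonoid (Matrix ι ι ℂ)) :
      Set (Matrix ι ι ℂ)) := isClosed_unitary
  have hK : IsCompact (Set.univ.pi fun _ : ι => Set.univ.pi fun _ : ι =>
      Metric.closedBall (0 : ℂ) 1) :=
    isCompact_univ_pi fun _ => isCompact_univ_pi fun _ => isCompact_closedBall _ _
  have : IsCompact ((Matrix.unitaryGroup ι ℂ : Submonoid (Matrix ι ι ℂ)) :
      Set (Matrix ι ι ℂ)) := by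
    refine IsCompact.of_isClosed_subset (X := ι → ι → ℂ) hK hc ?_
    intro A hA i _ j _
    simpa using entry_norm_bound_of_unitary hA i j
  exact isCompact_iff_compactSpace.mp this

theorem exists_haar : ∃ μ : Measure (Matrix.unitaryGroup ι ℂ),
    IsProbabilityMeasure μ ∧ μ.IsMulLeftInvariant := by
  have := borelUnitary (ι := ι)
  have := compactUnitary (ι := ι)
  refine ⟨Measure.haarMeasure ⊤, ⟨?_⟩, inferInstance⟩
  have := Measure.haarMeasure_self (K₀ := (⊤ : TopologicalSpace.PositiveCompacts
    (Matrix.unitaryGroup ι ℂ)))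
  simpa using this

/-- The Haar average of `M` commutes with `W ⊗ W`. -/
theorem haar_conj (μ : Measure (Matrix.unitaryGroup ι ℂ)) (hp : IsProbabilityMeasure μ)
    (hl : μ.IsMulLeftInvariant) (M X : Matrix (ι × ι) (ι × ι) ℂ)
    (hX : ∀ a b, X a b = ∫ V : Matrix.unitaryGroup ι ℂ,
            ((((V : Matrix ι ι ℂ) ⊗ₖ (V : Matrix ι ι ℂ)) * M *
              (((V : Matrix ι ι ℂ) ⊗ₖ (V : Matrix ι ι ℂ)))ᴴ) a b) ∂μ)
    (W : Matrix ι ι ℂ) (hW : W ∈ Matrix.unitaryGroup ι ℂ) :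
    (W ⊗ₖ W) * X * (W ⊗ₖ W)ᴴ = X := by
  have := borelUnitary (ι := ι)
  have := compactUnitary (ι := ι)
  have hcont : ∀ a b, Continuous fun V : Matrix.unitaryGroup ι ℂ =>
      ((((V : Matrix ι ι ℂ) ⊗ₖ (V : Matrix ι ι ℂ)) * M *
              (((V : Matrix ι ι ℂ) ⊗ₖ (V : Matrix ι ι ℂ)))ᴴ) a b) := by
    intro a b
    have h1 : Continuous fun V : Matrix.unitaryGroup ι ℂ =>
      ((V : Matrix ι ι ℂ) ⊗ₖ (V : Matrix ι ι ℂ)) := by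
      refine continuous_matrix fun i j => ?_
      simp only [kroneckerMap_apply]
      have : ∀ i j, Continuous fun V : Matrix.unitaryGroup ι ℂ => (V : Matrix ι ι ℂ) i j :=
        fun i j => (continuous_subtype_val).matrix_elem i j
      exact (this _ _).mul (this _ _)
    exact ((h1.matrix_mul continuous_const).matrix_mul h1.matrix_conjTranspose).matrix_elem a b
  have hintg : ∀ a b, Integrable (fun V : Matrix.unitaryGroup ι ℂ =>
      ((((V : Matrix ι ι ℂ) ⊗ₖ (V : Matrix ι ι ℂ)) * M *
              (((V : Matrix ι ι ℂ) ⊗ₖ (V : Matrix ι ι ℂ)))ᴴ) a b)) μ := by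
    intro a b
    exact (hcont a b).integrable_of_hasCompactSupport
      (HasCompactSupport.of_compactSpace _)
  ext a b
  have key : ∀ V : Matrix.unitaryGroup ι ℂ,
      ((((⟨W, hW⟩ * V : Matrix.unitaryGroup ι ℂ) : Matrix ι ι ℂ) ⊗ₖ
        ((⟨W, hW⟩ * V : Matrix.unitaryGroup ι ℂ) : Matrix ι ι ℂ)) * M *
        (((⟨W, hW⟩ * V : Matrix.unitaryGroup ι ℂ) : Matrix ι ι ℂ) ⊗ₖ
        ((⟨W, hW⟩ * V : Matrix.unitaryGroup ι ℂ) : Matrix ι ι ℂ))ᴴ) a b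
      = ∑ d, (∑ c, (W ⊗ₖ W) a c * ((((V : Matrix ι ι ℂ) ⊗ₖ (V : Matrix ι ι ℂ)) * M *
              (((V : Matrix ι ι ℂ) ⊗ₖ (V : Matrix ι ι ℂ)))ᴴ) c d)) * ((W ⊗ₖ W)ᴴ) d b := by
    intro V
    simp only [← Matrix.mul_apply]
    rw [Submonoid.coe_mul, mul_kronecker_mul, conjTranspose_mul]
    simp only [Matrix.mul_assoc]
  rw [hX a b, ← integral_mul_left_eq_self _ (⟨W, hW⟩ : Matrix.unitaryGroup ι ℂ)]
  simp only [key]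
  rw [integral_finsetSum]
  · rw [Matrix.mul_apply]
    refine Finset.sum_congr rfl fun d _ => ?_
    rw [integral_mul_const, integral_finsetSum, Matrix.mul_apply]
    · congr 1
      refine Finset.sum_congr rfl fun c _ => ?_
      rw [integral_const_mul, hX]
    · intro c _
      exact (hintg c d).const_mul _
  · intro d _
    exact (integrable_finsetSum _ fun c _ => (hintg c d).const_mul _).mul_const _

/-- Derivation `A ⊗ 1 + 1 ⊗ A`. -/
def dsum (A : Matrix ι ι ℂ) : Matrix (ι × ι) (ι × ι) ℂ := A ⊗ₖ 1 + 1 ⊗ₖ A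

theorem dsum_add (A B : Matrix ι ι ℂ) : dsum (A + B) = dsum A + dsum B := by
  simp only [dsum, add_kronecker, kronecker_add]; abel

theorem dsum_smul (c : ℂ) (A : Matrix ι ι ℂ) : dsum (c • A) = c • dsum A := by
  simp only [dsum, smul_kronecker, kronecker_smul, smul_add]

/-- Invariance under conjugation by all `W ⊗ W`. -/
def ConjInv (X : Matrix (ι × ι) (ι × ι) ℂ) : Prop :=
  ∀ W : Matrix ι ι ℂ, W ∈ Matrix.unitaryGroup ι ℂ → (W ⊗ₖ W) * X * (W ⊗ₖ W)ᴴ = X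

variable (X : Matrix (ι × ι) (ι × ι) ℂ)

theorem comm_unitary (hX : ConjInv X) (W : Matrix ι ι ℂ) (hW : W ∈ Matrix.unitaryGroup ι ℂ) :
    Commute X (W ⊗ₖ W) := by
  have h := hX W hW
  have h2 : (W ⊗ₖ W)ᴴ * (W ⊗ₖ W) = 1 := by
    rw [conjTranspose_kronecker, ← mul_kronecker_mul]
    have : Wᴴ * W = 1 := Matrix.mem_unitaryGroup_iff'.mp hW
    simp [this]
  have : X * (W ⊗ₖ W) = (W ⊗ₖ W) * X := by
    conv_lhs => rw [← h]
    rw [Matrix.mul_assoc, h2, Matrix.mul_one]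
  exact this

theorem comm_refl (hX : ConjInv X) (H : Matrix ι ι ℂ) (hH : Hᴴ = H) (hH2 : H * H = 1) :
    Commute X (dsum H) := by
  obtain ⟨s, hs, hs2⟩ : ∃ s : ℂ, star s = s ∧ s * s = 1 / 2 := by
    refine ⟨((Real.sqrt (1/2) : ℝ) : ℂ), Complex.conj_ofReal _, ?_⟩
    rw [← Complex.ofReal_mul, Real.mul_self_sqrt (by norm_num)]; norm_num
  have hu : ∀ z : ℂ, star z = -z → z * z = -1 → 
      s • (1 + z • H) ∈ Matrix.unitaryGroup ι ℂ := by
    intro z hz hz2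
    rw [Matrix.mem_unitaryGroup_iff, star_eq_conjTranspose]
    simp only [conjTranspose_smul, conjTranspose_add, conjTranspose_one, hH, hs, hz]
    rw [smul_mul_smul_comm, hs2]
    have : (1 + z • H) * (1 + -z • H) = (2 : ℂ) • (1 : Matrix ι ι ℂ) := by
      simp only [add_mul, mul_add, one_mul, mul_one, smul_mul_smul_comm, hH2]
      rw [mul_neg, hz2, neg_neg, two_smul, one_smul, neg_smul]
      abel
    rw [this, smul_smul]; norm_num
  have h1 := comm_unitary X hX _ (hu Complex.I (by simp) (by simp))
  have h2 := comm_unitary X hX _ (hu (-Complex.I) (by simp) (by simp))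
  have h3 := (h1.sub_right h2).smul_right (-Complex.I)
  refine (congrArg (Commute X) ?_).mpr h3
  simp only [dsum, add_kronecker, kronecker_add, smul_kronecker, kronecker_smul, smul_smul,
    smul_add, one_kronecker_one]
  ext a b
  simp only [Matrix.add_apply, Matrix.sub_apply, Matrix.smul_apply, smul_eq_mul]
  linear_combination (2 * (H ⊗ₖ (1 : Matrix ι ι ℂ)) a b + 2 * ((1 : Matrix ι ι ℂ) ⊗ₖ H) a b) * 
    (s * s * Complex.I_sq - hs2)

theorem comm_proj (hX : ConjInv X) (v : ι → ℂ) : Commute X (dsum (vecMulVec v (star v))) := by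
  by_cases hv : v = 0
  · subst hv; simp [dsum]
  set k : ℂ := star v ⬝ᵥ v with hk
  have hk0 : k ≠ 0 := by
    rw [hk]; exact fun h => hv (dotProduct_star_self_eq_zero.mp h)
  have hks : star k = k := by
    simp [hk, dotProduct, mul_comm]
  set Q := vecMulVec v (star v) with hQ
  have hQQ : Q * Q = k • Q := by
    rw [hQ, vecMulVec_mul_vecMulVec, vecMulVec_smul]
  have hQs : Qᴴ = Q := by
    rw [hQ, conjTranspose_vecMulVec, star_star]
  have h := comm_refl X hX (1 + (-2 / k) • Q) (by
      simp [conjTranspose_smul, hQs]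
      rw [show (starRingEnd ℂ) k = k from hks]) (by
      simp only [add_mul, mul_add, one_mul, mul_one, smul_mul_smul_comm, hQQ, smul_smul]
      rw [add_assoc, ← add_smul, ← add_smul, add_eq_left]
      convert zero_smul ℂ Q using 2
      field_simp; ring)
  have h1 : Commute X (dsum 1) := comm_refl X hX 1 (by simp) (by simp)
  have h2 := ((h.sub_right h1).smul_right (-k / 2))
  rw [dsum_add, dsum_smul, add_sub_cancel_left, smul_smul] at h2
  have : -k / 2 * (-2 / k) = 1 := by field_simp
  rwa [this, one_smul] at h2

theorem comm_all (hX : ConjInv X) (x y : ι → ℂ) : Commute X (dsum (vecMulVec x (star y))) := by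
  have h : ∀ z : ℂ, Commute X (dsum (vecMulVec (x + z • y) (star (x + z • y)))) :=
    fun z => comm_proj X hX _
  have := ((((h 1).smul_right (1/4:ℂ)).add_right ((h (-1)).smul_right (-1/4:ℂ))).add_right
    ((h Complex.I).smul_right (Complex.I/4))).add_right
    ((h (-Complex.I)).smul_right (-Complex.I/4))
  simp only [← dsum_smul, ← dsum_add] at this
  refine (congrArg (fun A => Commute X (dsum A)) ?_).mpr this
  ext a b
  simp [vecMulVec_apply]
  ring_nf
  simp
  ring

theorem master (hX : ConjInv X) (i j a b c d : ι) :
    (if c = j then X (a, b) (i, d) else 0) + (if d = j then X (a, b) (c, i) else 0) =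
    (if a = i then X (j, b) (c, d) else 0) + (if b = i then X (a, j) (c, d) else 0) := by
  have h := comm_all X hX (Pi.single i 1) (Pi.single j 1)
  have h2 := congrFun (congrFun h.eq (a, b)) (c, d)
  simp only [dsum, mul_add, add_mul, Matrix.add_apply, Matrix.mul_apply, kroneckerMap_apply,
    Fintype.sum_prod_type, vecMulVec_apply, Pi.star_apply, Pi.single_apply, Matrix.one_apply] at h2
  simp [Finset.sum_add_distrib] at h2
  exact h2

theorem contract_diag (P : ι → ι → ℂ)
    (h : ∀ b i j d, (if d = j then P b i else 0) = (if b = i then P j d else 0)) (b d : ι) :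
    (Fintype.card ι : ℂ) * P b d = if b = d then ∑ a, P a a else 0 := by
  have h1 : ∑ i, (if d = b then P i i else 0) = ∑ i : ι, (if i = i then P b d else 0) :=
    Finset.sum_congr rfl fun i _ => h i i b d
  simp only [if_true, Finset.sum_const, Finset.card_univ, nsmul_eq_mul] at h1
  rw [← h1]
  by_cases hbd : b = d
  · simp [hbd]
  · simp [hbd, Ne.symm hbd]

theorem solve (hX : ConjInv X) (j b c d : ι) :
    (Fintype.card ι : ℂ) * ((Fintype.card ι : ℂ) * X (j, b) (c, d) + X (b, j) (c, d)) =
      (if c = j then if b = d then ∑ b, ∑ a, X (a, b) (a, b) else 0 else 0) +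
      (if d = j then if b = c then ∑ b, ∑ a, X (a, b) (b, a) else 0 else 0) := by
  have hP := contract_diag (fun b d => ∑ a, X (a, b) (a, d)) (by
    intro b i j d
    have h : ∑ a, _ = ∑ a, _ := Finset.sum_congr rfl fun a _ => master X hX i j a b a d
    simp only [Finset.sum_add_distrib, Finset.sum_ite_eq', Finset.sum_ite_eq, Finset.mem_univ,
      if_true] at h
    have h := add_left_cancel h
    by_cases h1 : d = j <;> by_cases h2 : b = i <;> simp [h1, h2] at h ⊢ <;> first | exact h | exact h.symm)
  have hR := contract_diag (fun b c => ∑ a, X (a, b) (c, a)) (by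
    intro b i j c
    have h : ∑ a, _ = ∑ a, _ := Finset.sum_congr rfl fun a _ => master X hX i j a b c a
    simp only [Finset.sum_add_distrib, Finset.sum_ite_eq', Finset.sum_ite_eq, Finset.mem_univ,
      if_true] at h
    rw [add_comm] at h
    have h := add_left_cancel h
    by_cases h1 : c = j <;> by_cases h2 : b = i <;> simp [h1, h2] at h ⊢ <;> first | exact h | exact h.symm)
  have h : ∑ a, _ = ∑ a, _ := Finset.sum_congr rfl fun a _ => master X hX a j a b c d
  simp only [Finset.sum_add_distrib, Finset.sum_ite_eq', Finset.sum_ite_eq, Finset.mem_univ,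
      if_true, Finset.sum_const, Finset.card_univ, nsmul_eq_mul] at h
  rw [← h, mul_add]
  congr 1
  · rw [← hP b d]; split_ifs <;> simp
  · rw [← hR b c]; split_ifs <;> simp

theorem swap_sum {m n : ℕ}
    (X : Matrix ((Fin m × Fin n) × (Fin m × Fin n)) ((Fin m × Fin n) × (Fin m × Fin n)) ℂ)
    (hX : ConjInv X) (hN : (m * n : ℂ) ≠ 0) (t s S : ℂ)
    (ht : ∑ b, ∑ a, X (a, b) (a, b) = t)
    (hs : ∑ b, ∑ a, X (a, b) (b, a) = s)
    (hS : ∑ i, ∑ j, ∑ b, ∑ c, X ((i, b), (j, c)) ((j, b), (i, c)) = S) :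
    ((m * n : ℂ) ^ 2 - 1) * S = t * (m * n ^ 2 - m) + s * (m ^ 2 * n - n) := by
  have h1 : ∀ i j b c, _ := fun (i j : Fin m) (b c : Fin n) =>
    solve X hX (i, b) (j, c) (j, b) (i, c)
  have h2 : ∀ i j b c, _ := fun (i j : Fin m) (b c : Fin n) =>
    solve X hX (j, c) (i, b) (j, b) (i, c)
  have e1 : ∑ i, ∑ j, ∑ b, ∑ c, _ = ∑ i, ∑ j, ∑ b, ∑ c, _ :=
    Finset.sum_congr rfl fun i _ => Finset.sum_congr rfl fun j _ =>
      Finset.sum_congr rfl fun b _ => Finset.sum_congr rfl fun c _ => h1 i j b c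
  have e2 : ∑ i, ∑ j, ∑ b, ∑ c, _ = ∑ i, ∑ j, ∑ b, ∑ c, _ :=
    Finset.sum_congr rfl fun i _ => Finset.sum_congr rfl fun j _ =>
      Finset.sum_congr rfl fun b _ => Finset.sum_congr rfl fun c _ => h2 i j b c
  simp only [ht, hs, Finset.sum_add_distrib, ← Finset.mul_sum, hS, Fintype.card_prod,
    Fintype.card_fin, Nat.cast_mul, Prod.mk.injEq, and_true, true_and] at e1 e2
  simp at e1 e2
  refine mul_left_cancel₀ hN ?_
  linear_combination (m * n : ℂ) * e1 - e2

theorem swap_sum_one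
    (X : Matrix ((Fin 1 × Fin 1) × (Fin 1 × Fin 1)) ((Fin 1 × Fin 1) × (Fin 1 × Fin 1)) ℂ) :
    ∑ i, ∑ j, ∑ b, ∑ c, X ((i, b), (j, c)) ((j, b), (i, c)) = ∑ b, ∑ a, X (a, b) (a, b) := by
  simp [Fintype.sum_prod_type]

theorem real_bound (m n : ℕ) (hm : 1 ≤ m) (hn : 1 ≤ n) (S t s : ℝ) (ht : 0 ≤ t) (hs : 0 ≤ s)
    (h1 : m = 1 → n = 1 → S = t)
    (h : ((m * n : ℝ) ^ 2 - 1) * S = t * (m * n ^ 2 - m) + s * (m ^ 2 * n - n)) :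
    S ≤ t / m + (m / (m * n : ℝ)) * s := by
  have hm' : (1 : ℝ) ≤ m := by exact_mod_cast hm
  have hn' : (1 : ℝ) ≤ n := by exact_mod_cast hn
  by_cases hmn : m = 1 ∧ n = 1
  · rw [h1 hmn.1 hmn.2]; simp [hmn.1, hmn.2, hs]
  have hgt : 1 < m * n := by
    rcases Nat.lt_or_ge 1 m with h | h
    · nlinarith
    · have : m = 1 := by omega
      have : n ≠ 1 := fun h => hmn ⟨this, h⟩
      subst m; omega
  have hgt' : (1 : ℝ) < m * n := by exact_mod_cast hgt
  have hpos : (0 : ℝ) < (m * n : ℝ) ^ 2 - 1 := by nlinarith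
  refine le_of_mul_le_mul_left ?_ hpos
  rw [h, mul_add]
  have hm0 : (0 : ℝ) < m := by linarith
  have hn0 : (0 : ℝ) < n := by linarith
  have e1 : ((m * n : ℝ) ^ 2 - 1) * (t / m) = t * (m * n ^ 2 - 1 / m) := by
    field_simp
  have e2 : ((m * n : ℝ) ^ 2 - 1) * (m / (m * n : ℝ) * s) = s * (m ^ 2 * n - 1 / n) := by
    field_simp
  have i1 : 1 / (m : ℝ) ≤ m := ((div_le_one hm0).mpr hm').trans hm'
  have i2 : 1 / (n : ℝ) ≤ n := ((div_le_one hn0).mpr hn').trans hn'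
  rw [e1, e2]
  gcongr

end Helpers

/-- **Unitary 2-designs are quantum Rényi 2-extractors**: for every positive semidefinite
`ρ` on `ℂ^N = ℂ^M ⊗ ℂ^{M'}`,
`(1/L) Σ_i Tr[(Tr_{M'}[U_i ρ U_i†])²] ≤ (Tr ρ)²/M + (M/N)·Tr[ρ²]`. -/
theorem two_design_renyi2_extractor
    (dM dM' : ℕ) (hM : 1 ≤ dM) (hM' : 1 ≤ dM')
    (L : ℕ) (hL : 1 ≤ L)
    (U : Fin L → Matrix (Fin dM × Fin dM') (Fin dM × Fin dM') ℂ)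
    (hU : IsUnitaryTwoDesign U)
    (ρ : Matrix (Fin dM × Fin dM') (Fin dM × Fin dM') ℂ) (hρ : ρ.PosSemidef) :
    (1 / (L : ℝ)) *
        ∑ i, (Matrix.trace (ptraceRight (U i * ρ * (U i)ᴴ) *
          ptraceRight (U i * ρ * (U i)ᴴ))).re ≤
      (ρ.trace.re) ^ 2 / (dM : ℝ) +
        ((dM : ℝ) / ((dM : ℝ) * (dM' : ℝ))) * (Matrix.trace (ρ * ρ)).re := by
  obtain ⟨hUu, hdes⟩ := hU
  obtain ⟨μ, hp, hl⟩ := exists_haar (ι := Fin dM × Fin dM')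
  set Y : Fin L → Matrix (Fin dM × Fin dM') (Fin dM × Fin dM') ℂ :=
    fun i => U i * ρ * (U i)ᴴ with hY
  set X : Matrix ((Fin dM × Fin dM') × (Fin dM × Fin dM'))
      ((Fin dM × Fin dM') × (Fin dM × Fin dM')) ℂ :=
    Matrix.of fun a b => (L : ℂ)⁻¹ *
      (∑ i, (U i ⊗ₖ U i) * (ρ ⊗ₖ ρ) * ((U i) ⊗ₖ (U i))ᴴ) a b with hXdef
  have hX : ConjInv X := fun W hW =>
    haar_conj μ hp hl (ρ ⊗ₖ ρ) X (fun a b => hdes μ hp hl (ρ ⊗ₖ ρ) a b) W hW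
  have hXY : ∀ a b c d, X (a, b) (c, d) = (L : ℂ)⁻¹ * ∑ i, Y i a c * Y i b d := by
    intro a b c d
    rw [hXdef, Matrix.of_apply, Matrix.sum_apply]
    congr 1
    refine Finset.sum_congr rfl fun i _ => ?_
    rw [conjTranspose_kronecker, ← mul_kronecker_mul, ← mul_kronecker_mul, kroneckerMap_apply]
  have hL0 : (L : ℂ) ≠ 0 := by exact_mod_cast (by omega : L ≠ 0)
  have hUU : ∀ i, (U i)ᴴ * U i = 1 := fun i => Matrix.mem_unitaryGroup_iff'.mp (hUu i)
  have htrY : ∀ i, (Y i).trace = ρ.trace := by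
    intro i
    rw [hY, Matrix.trace_mul_comm, ← Matrix.mul_assoc, hUU, Matrix.one_mul]
  have htrYY : ∀ i, (Y i * Y i).trace = (ρ * ρ).trace := by
    intro i
    have : Y i * Y i = U i * (ρ * ρ) * (U i)ᴴ := by
      calc Y i * Y i = U i * ρ * ((U i)ᴴ * U i) * ρ * (U i)ᴴ := by
            simp only [hY, Matrix.mul_assoc]
        _ = _ := by rw [hUU, Matrix.mul_one]; simp only [Matrix.mul_assoc]
    rw [this, Matrix.trace_mul_comm, ← Matrix.mul_assoc, hUU, Matrix.one_mul]
  have ht : ∑ b, ∑ a, X (a, b) (a, b) = ρ.trace ^ 2 := by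
    simp only [hXY, ← Finset.mul_sum]
    have : ∑ b, ∑ a, ∑ i, Y i a a * Y i b b = ∑ i : Fin L, ρ.trace ^ 2 := by
      rw [Finset.sum_congr rfl fun b _ => Finset.sum_comm, Finset.sum_comm]
      refine Finset.sum_congr rfl fun i _ => ?_
      simp only [← Finset.sum_mul, ← Finset.mul_sum]
      rw [← htrY i, sq]; rfl
    rw [this]; simp [hL0]
  have hs : ∑ b, ∑ a, X (a, b) (b, a) = (ρ * ρ).trace := by
    simp only [hXY, ← Finset.mul_sum]
    have : ∑ b, ∑ a, ∑ i, Y i a b * Y i b a = ∑ i : Fin L, (ρ * ρ).trace := by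
      rw [Finset.sum_congr rfl fun b _ => Finset.sum_comm, Finset.sum_comm]
      refine Finset.sum_congr rfl fun i _ => ?_
      rw [← htrYY i, Matrix.trace, Finset.sum_comm]
      simp only [Matrix.diag_apply, Matrix.mul_apply]
    rw [this]; simp [hL0]
  have hS : ∑ i, ∑ j, ∑ b, ∑ c, X ((i, b), (j, c)) ((j, b), (i, c)) =
      (L : ℂ)⁻¹ * ∑ k, (ptraceRight (Y k) * ptraceRight (Y k)).trace := by
    simp only [hXY, ← Finset.mul_sum]
    congr 1
    simp only [Matrix.trace, Matrix.diag_apply, Matrix.mul_apply, ptraceRight, Matrix.of_apply,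
      Finset.sum_mul_sum]
    rw [Finset.sum_comm]
    simp only [Finset.sum_comm (s := (Finset.univ : Finset (Fin L)))]
    rw [Finset.sum_comm]
  have hm0 : (dM : ℂ) ≠ 0 := by exact_mod_cast (by omega : dM ≠ 0)
  have hn0 : (dM' : ℂ) ≠ 0 := by exact_mod_cast (by omega : dM' ≠ 0)
  have key := swap_sum X hX (mul_ne_zero hm0 hn0) _ _ _ ht hs hS
  have him : ρ.trace.im = 0 := (Complex.nonneg_iff.mp hρ.trace_nonneg).2.symm
  have htr : ρ.trace ^ 2 = ((ρ.trace.re ^ 2 : ℝ) : ℂ) := by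
    rw [Complex.ext_iff]; simp [sq, him]
  have hs0 : 0 ≤ (ρ * ρ).trace := by
    have := (Matrix.posSemidef_conjTranspose_mul_self ρ).trace_nonneg
    rwa [hρ.isHermitian.eq] at this
  have hre : ((L : ℂ)⁻¹ * ∑ k, (ptraceRight (Y k) * ptraceRight (Y k)).trace).re =
      (1 / (L : ℝ)) * ∑ i, (Matrix.trace (ptraceRight (Y i) * ptraceRight (Y i))).re := by
    rw [← Complex.re_sum, one_div, ← Complex.re_ofReal_mul]; simp
  rw [← hre]
  refine real_bound dM dM' hM hM' _ _ _ (sq_nonneg _) (Complex.nonneg_iff.mp hs0).1 ?_ ?_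
  · rintro rfl rfl
    rw [← hS, swap_sum_one, ht, htr, Complex.ofReal_re]
  · have k2 := congrArg Complex.re key
    rw [htr] at k2
    have c1 : ((dM * dM' : ℂ) ^ 2 - 1) = (((dM * dM' : ℝ) ^ 2 - 1 : ℝ) : ℂ) := by push_cast; rfl
    have c2 : ((dM : ℂ) * dM' ^ 2 - dM) = ((dM * dM' ^ 2 - dM : ℝ) : ℂ) := by push_cast; rfl
    have c3 : ((dM : ℂ) ^ 2 * dM' - dM') = ((dM ^ 2 * dM' - dM' : ℝ) : ℂ) := by push_cast; rfl
    rw [c1, c2, c3, Complex.re_ofReal_mul, Complex.add_re, Complex.re_mul_ofReal,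
      Complex.re_mul_ofReal, Complex.ofReal_re] at k2
    exact k2
end
end

section
/- The conditional Rényi 2-entropy is upper bounded by the conditional von Neumann entropy: for every state ρ_AB on H_A ⊗ H_B, H₂(A|B)_ρ ≤ H(A|B)_ρ; i.e., −log Tr[ρ_AB (1_A ⊗ ρ_B^{-1/2}) ρ_AB (1_A ⊗ ρ_B^{-1/2})] ≤ H(ρ_AB) − H(ρ_B), where ρ_B = Tr_A[ρ_AB]. -/
open scoped Kronecker ComplexOrder
open Matrix

noncomputable section

/-- Conditional Rényi 2-entropy `H₂(A|B)_ρ` (base-2 logarithm), conditioning on the right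
tensor factor. -/
def condH2 {α β : Type*} [Fintype α] [Fintype β] [DecidableEq α] [DecidableEq β]
    (ρ : Matrix (α × β) (α × β) ℂ) : ℝ :=
  - Real.logb 2
      (Matrix.trace (ρ * ((1 : Matrix α α ℂ) ⊗ₖ invSqrt (ptraceLeft ρ)) * ρ *
        ((1 : Matrix α α ℂ) ⊗ₖ invSqrt (ptraceLeft ρ)))).re

/-- Von Neumann entropy (base-2 logarithm) of a Hermitian matrix, computed from its
eigenvalues (junk value `0` for non-Hermitian matrices); `0 · log 0 = 0`. -/
def vNEntropy {n : Type*} [Fintype n] [DecidableEq n] (A : Matrix n n ℂ) : ℝ :=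
  if hA : A.IsHermitian then -∑ i, hA.eigenvalues i * Real.logb 2 (hA.eigenvalues i) else 0

lemma aux_jensen {ι : Type*} [Fintype ι] (w x : ι → ℝ) (hw : ∀ i, 0 ≤ w i) (h1 : ∑ i, w i = 1)
    (hx : ∀ i, 0 < w i → 0 < x i) :
    0 < ∑ i, w i * x i ∧ ∑ i, w i * Real.log (x i) ≤ Real.log (∑ i, w i * x i) := by
  have hnn : ∀ i, 0 ≤ w i * x i := by
    intro i
    rcases (hw i).eq_or_lt with h | h
    · simp [← h]
    · exact (mul_pos h (hx i h)).le
  have hpos : 0 < ∑ i, w i * x i := by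
    obtain ⟨i, _, hi⟩ : ∃ i ∈ Finset.univ, 0 < w i := by
      by_contra! hcon
      have := Finset.sum_nonpos hcon
      linarith
    exact Finset.sum_pos' (fun i _ => hnn i) ⟨i, Finset.mem_univ i, mul_pos hi (hx i hi)⟩
  refine ⟨hpos, ?_⟩
  set S := ∑ i, w i * x i with hS
  have key : ∀ i, w i * Real.log (x i) ≤ w i * Real.log S + (w i * x i) / S - w i := by
    intro i
    rcases (hw i).eq_or_lt with h | h
    · simp [← h]
    · have hxi := hx i h
      have h2 := Real.log_le_sub_one_of_pos (div_pos hxi hpos)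
      rw [Real.log_div hxi.ne' hpos.ne'] at h2
      have h3 := mul_le_mul_of_nonneg_left h2 h.le
      have h4 : w i * x i / S = w i * (x i / S) := by ring
      rw [h4]; nlinarith
  calc ∑ i, w i * Real.log (x i)
      ≤ ∑ i, (w i * Real.log S + (w i * x i) / S - w i) := Finset.sum_le_sum fun i _ => key i
    _ = Real.log S := by
      rw [Finset.sum_sub_distrib, Finset.sum_add_distrib, ← Finset.sum_mul, ← Finset.sum_div, h1,
        ← hS, div_self hpos.ne']; ring

lemma aux_real {ι α β : Type*} [Fintype ι] [Fintype α] [Fintype β]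
    (p : ι → ℝ) (s : β → ℝ) (q : ι → α × β → ℝ)
    (hp : ∀ i, 0 ≤ p i) (hp1 : ∑ i, p i = 1) (hq : ∀ i j, 0 ≤ q i j) (hq1 : ∀ i, ∑ j, q i j = 1)
    (hs : ∀ b, ∑ i, ∑ a, p i * q i (a, b) = s b) :
    0 < ∑ i, p i * (p i * (∑ j, q i j * Real.sqrt (s j.2)⁻¹) ^ 2) ∧
    ∑ i, p i * Real.log (p i) - ∑ b, s b * Real.log (s b) ≤
      Real.log (∑ i, p i * (p i * (∑ j, q i j * Real.sqrt (s j.2)⁻¹) ^ 2)) := by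
  have hpq : ∀ i j, 0 ≤ p i * q i j := fun i j => mul_nonneg (hp i) (hq i j)
  have hspos : ∀ i j, 0 < p i → 0 < q i j → 0 < s j.2 := by
    rintro i ⟨a, b⟩ h1 h2
    rw [← hs b]
    refine lt_of_lt_of_le (mul_pos h1 h2) ?_
    refine le_trans ?_ (Finset.single_le_sum (f := fun i => ∑ a, p i * q i (a, b))
      (fun i _ => Finset.sum_nonneg fun a _ => hpq i (a, b)) (Finset.mem_univ i))
    exact Finset.single_le_sum (f := fun a => p i * q i (a, b))
      (fun a _ => hpq i (a, b)) (Finset.mem_univ a)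
  have inner : ∀ i, 0 < p i → 0 < ∑ j, q i j * Real.sqrt (s j.2)⁻¹ ∧
      ∑ j, q i j * Real.log (Real.sqrt (s j.2)⁻¹) ≤
        Real.log (∑ j, q i j * Real.sqrt (s j.2)⁻¹) := by
    intro i hi
    exact aux_jensen _ _ (hq i) (hq1 i)
      fun j hj => Real.sqrt_pos.2 (inv_pos.2 (hspos i j hi hj))
  have outer := aux_jensen p (fun i => p i * (∑ j, q i j * Real.sqrt (s j.2)⁻¹) ^ 2) hp hp1
    (fun i hi => mul_pos hi (pow_pos (inner i hi).1 2))
  refine ⟨outer.1, le_trans ?_ outer.2⟩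
  have e : ∑ b, s b * Real.log (s b) = ∑ i, p i * ∑ j, q i j * Real.log (s j.2) := by
    simp_rw [Finset.mul_sum, Fintype.sum_prod_type_right]
    rw [Finset.sum_comm]
    refine Finset.sum_congr rfl fun b _ => ?_
    conv_lhs => rw [← hs b]
    rw [hs b, ← hs b, Finset.sum_mul]
    refine Finset.sum_congr rfl fun i _ => ?_
    rw [Finset.sum_mul]
    refine Finset.sum_congr rfl fun a _ => ?_
    rw [hs b]; ring
  rw [e, ← Finset.sum_sub_distrib]
  refine Finset.sum_le_sum fun i _ => ?_
  rcases (hp i).eq_or_lt with h | h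
  · simp [← h]
  · obtain ⟨ha, hl⟩ := inner i h
    rw [Real.log_mul h.ne' (pow_pos ha 2).ne', Real.log_pow, ← mul_sub]
    refine mul_le_mul_of_nonneg_left ?_ h.le
    have : ∑ j, q i j * Real.log (Real.sqrt (s j.2)⁻¹) =
        -(1/2) * ∑ j, q i j * Real.log (s j.2) := by
      rw [Finset.mul_sum]
      refine Finset.sum_congr rfl fun j _ => ?_
      rcases (hq i j).eq_or_lt with h' | h'
      · simp [← h']
      · rw [Real.log_sqrt (inv_pos.2 (hspos i j h h')).le, Real.log_inv]; ring
    rw [this] at hl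
    push_cast
    linarith

lemma aux_conj_diag {n m : Type*} [Fintype n] [Fintype m] [DecidableEq m]
    (M : Matrix n m ℂ) (d : m → ℝ) (i : n) :
    (M * diagonal (fun j => (d j : ℂ)) * Mᴴ) i i
      = ((∑ j, Complex.normSq (M i j) * d j : ℝ) : ℂ) := by
  rw [Matrix.mul_apply]
  push_cast
  refine Finset.sum_congr rfl fun j _ => ?_
  rw [Matrix.mul_diagonal, conjTranspose_apply, Complex.normSq_eq_conj_mul_self]
  simp only [Complex.star_def]; ring

lemma aux_ptrace_herm {α β : Type*} [Fintype α]
    {ρ : Matrix (α × β) (α × β) ℂ} (h : ρ.IsHermitian) : (ptraceLeft ρ).IsHermitian := by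
  ext i j
  simp only [ptraceLeft, conjTranspose_apply, of_apply, star_sum]
  exact Finset.sum_congr rfl fun a _ => h.apply _ _

lemma aux_ptrace_conj {α β : Type*} [Fintype α] [Fintype β] [DecidableEq α]
    (ρ : Matrix (α × β) (α × β) ℂ) (U : Matrix β β ℂ) :
    ptraceLeft (((1 : Matrix α α ℂ) ⊗ₖ U)ᴴ * ρ * ((1 : Matrix α α ℂ) ⊗ₖ U))
      = Uᴴ * ptraceLeft ρ * U := by
  ext i j
  simp only [ptraceLeft, of_apply, Matrix.mul_apply, Fintype.sum_prod_type,
    conjTranspose_apply, kroneckerMap_apply, Matrix.one_apply, ite_mul, one_mul, zero_mul,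
    mul_ite, mul_zero, apply_ite star, star_zero, Finset.sum_ite_irrel, Finset.sum_const_zero,
    Finset.sum_ite_eq', Finset.mem_univ, if_true, Finset.sum_mul,
    Finset.mul_sum]
  rw [Finset.sum_comm]
  refine Finset.sum_congr rfl fun _ _ => ?_
  rw [Finset.sum_comm]

/-- **The conditional Rényi 2-entropy is upper bounded by the conditional von Neumann
entropy**: `H₂(A|B)_ρ ≤ H(A|B)_ρ = H(ρ_AB) − H(ρ_B)`. -/
theorem condH2_le_condVN
    {α β : Type*} [Fintype α] [Fintype β] [DecidableEq α] [DecidableEq β]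
    (ρ : Matrix (α × β) (α × β) ℂ) (hρ : ρ.PosSemidef) (hρtr : ρ.trace = 1) :
    condH2 ρ ≤ vNEntropy ρ - vNEntropy (ptraceLeft ρ) := by
  have hA := hρ.isHermitian
  have hB := aux_ptrace_herm hA
  set V : Matrix (α × β) (α × β) ℂ := (hA.eigenvectorUnitary : Matrix (α × β) (α × β) ℂ) with hV
  set U : Matrix β β ℂ := (hB.eigenvectorUnitary : Matrix β β ℂ) with hU
  set p := hA.eigenvalues with hp
  set s := hB.eigenvalues with hs
  have VV : V * Vᴴ = 1 := mem_unitaryGroup_iff.1 hA.eigenvectorUnitary.2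
  have VV' : Vᴴ * V = 1 := mem_unitaryGroup_iff'.1 hA.eigenvectorUnitary.2
  have UU : U * Uᴴ = 1 := mem_unitaryGroup_iff.1 hB.eigenvectorUnitary.2
  have UU' : Uᴴ * U = 1 := mem_unitaryGroup_iff'.1 hB.eigenvectorUnitary.2
  have specA : ρ = V * diagonal (fun i => (p i : ℂ)) * Vᴴ := by
    have := hA.spectral_theorem
    rw [Unitary.conjStarAlgAut_apply] at this
    exact this
  have specB : ptraceLeft ρ = U * diagonal (fun i => (s i : ℂ)) * Uᴴ := by
    have := hB.spectral_theorem
    rw [Unitary.conjStarAlgAut_apply] at this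
    exact this
  set W : Matrix (α × β) (α × β) ℂ := (1 : Matrix α α ℂ) ⊗ₖ U with hW
  have hWh : Wᴴ = (1 : Matrix α α ℂ) ⊗ₖ Uᴴ := by
    rw [hW, conjTranspose_kronecker, conjTranspose_one]
  have WW : W * Wᴴ = 1 := by
    rw [hWh, hW, ← mul_kronecker_mul, UU, one_mul, one_kronecker_one]
  set M := Vᴴ * W with hM
  have MM : M * Mᴴ = 1 := by
    rw [hM, conjTranspose_mul, conjTranspose_conjTranspose, Matrix.mul_assoc,
      ← Matrix.mul_assoc W, WW, Matrix.one_mul, VV']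
  have hT : (1 : Matrix α α ℂ) ⊗ₖ invSqrt (ptraceLeft ρ)
      = W * diagonal (fun j : α × β => ((Real.sqrt (s j.2)⁻¹ : ℝ) : ℂ)) * Wᴴ := by
    have hD : diagonal (fun j : α × β => ((Real.sqrt (s j.2)⁻¹ : ℝ) : ℂ))
      = (1 : Matrix α α ℂ) ⊗ₖ diagonal (fun j => ((Real.sqrt (s j)⁻¹ : ℝ) : ℂ)) := by
      rw [← diagonal_one, diagonal_kronecker_diagonal]; simp
    rw [hD, hWh, hW, ← mul_kronecker_mul, ← mul_kronecker_mul, one_mul, one_mul, invSqrt,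
      dif_pos hB]
  set T := (1 : Matrix α α ℂ) ⊗ₖ invSqrt (ptraceLeft ρ) with hTdef
  set N := M * diagonal (fun j : α × β => ((Real.sqrt (s j.2)⁻¹ : ℝ) : ℂ)) * Mᴴ with hN
  have hNT : N = Vᴴ * T * V := by
    rw [hN, hT, hM, conjTranspose_mul, conjTranspose_conjTranspose]
    simp only [Matrix.mul_assoc]
  have hNherm : Nᴴ = N := by
    rw [hN]
    simp only [conjTranspose_mul, conjTranspose_conjTranspose, diagonal_conjTranspose,
      Matrix.mul_assoc]
    congr 3
    ext j; simp
  have hNdiag : ∀ i, N i i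
      = ((∑ j, Complex.normSq (M i j) * Real.sqrt (s j.2)⁻¹ : ℝ) : ℂ) :=
    fun i => aux_conj_diag M _ i
  have htr : (ρ * T * ρ * T).trace = ((∑ i, ∑ k, p i * p k * Complex.normSq (N i k) : ℝ) : ℂ) := by
    set P := diagonal (fun i => (p i : ℂ)) with hP
    have h1 : (ρ * T * ρ * T).trace = (P * N * (P * N)).trace := by
      rw [hNT]
      calc (ρ * T * ρ * T).trace = (V * (P * (Vᴴ * T * V) * (P * (Vᴴ * T)))).trace := by
            conv_lhs => rw [specA]
            simp only [Matrix.mul_assoc]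
        _ = _ := by
            rw [Matrix.trace_mul_comm]
            simp only [Matrix.mul_assoc]
    rw [h1, Matrix.trace]
    push_cast
    refine Finset.sum_congr rfl fun i _ => ?_
    rw [diag_apply, Matrix.mul_apply]
    refine Finset.sum_congr rfl fun k _ => ?_
    rw [hP, diagonal_mul, diagonal_mul, Complex.normSq_eq_conj_mul_self]
    have : N k i = star (N i k) := by
      conv_lhs => rw [← hNherm]
      rfl
    rw [this]; simp only [Complex.star_def]; ring
  have hp0 : ∀ i, 0 ≤ p i := hρ.eigenvalues_nonneg
  have hp1 : ∑ i, p i = 1 := by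
    have : (1 : ℂ) = ∑ i, ((p i : ℝ) : ℂ) := by
      rw [← hρtr]
      exact hA.trace_eq_sum_eigenvalues
    exact_mod_cast this.symm
  have hq1 : ∀ i, ∑ j, Complex.normSq (M i j) = 1 := by
    intro i
    have := aux_conj_diag M (fun _ => 1) i
    simp only [Complex.ofReal_one, diagonal_one, Matrix.mul_one, MM, one_apply_eq, mul_one] at this
    exact_mod_cast this.symm
  have hsum : ∀ b, ∑ i, ∑ a, p i * Complex.normSq (M i (a, b)) = s b := by
    intro b
    have h1 := aux_ptrace_conj ρ U
    have h2 : Uᴴ * ptraceLeft ρ * U = diagonal (fun i => (s i : ℂ)) := by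
      rw [specB]
      calc _ = (Uᴴ * U) * diagonal (fun i => (s i : ℂ)) * (Uᴴ * U) := by
            simp only [Matrix.mul_assoc]
        _ = _ := by rw [UU']; simp
    have h3 : Wᴴ * ρ * W = Mᴴ * diagonal (fun i => (p i : ℂ)) * Mᴴᴴ := by
      conv_lhs => rw [specA]
      rw [hM, conjTranspose_conjTranspose, conjTranspose_mul, conjTranspose_conjTranspose]
      simp only [Matrix.mul_assoc]
    rw [h2, ← hW, h3] at h1
    have h4 := congrFun (congrFun h1 b) b
    rw [diagonal_apply_eq] at h4
    simp only [ptraceLeft, of_apply, aux_conj_diag] at h4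
    rw [Finset.sum_comm, ← Complex.ofReal_inj, ← h4]
    push_cast
    refine Finset.sum_congr rfl fun a _ => Finset.sum_congr rfl fun i _ => ?_
    rw [conjTranspose_apply, Complex.star_def, Complex.normSq_conj, mul_comm]
  obtain ⟨hpos, hmain⟩ := aux_real p s (fun i j => Complex.normSq (M i j)) hp0 hp1
    (fun i j => Complex.normSq_nonneg _) hq1 hsum
  have hle : ∑ i, p i * (p i * (∑ j, Complex.normSq (M i j) * Real.sqrt (s j.2)⁻¹) ^ 2)
      ≤ ∑ i, ∑ k, p i * p k * Complex.normSq (N i k) := by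
    refine Finset.sum_le_sum fun i _ => ?_
    refine le_trans (le_of_eq ?_) (Finset.single_le_sum
      (f := fun k => p i * p k * Complex.normSq (N i k))
      (fun k _ => mul_nonneg (mul_nonneg (hp0 i) (hp0 k)) (Complex.normSq_nonneg _))
      (Finset.mem_univ i))
    simp only [hNdiag, Complex.normSq_ofReal]
    ring
  have hfin := hmain.trans (Real.log_le_log hpos hle)
  rw [condH2, ← hTdef, htr, Complex.ofReal_re, vNEntropy, vNEntropy, dif_pos hA, dif_pos hB]
  simp only [Real.logb, ← hp, ← hs, ← mul_div_assoc, ← Finset.sum_div]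
  have hl2 : 0 < Real.log 2 := Real.log_pos (by norm_num)
  have := div_le_div_of_nonneg_right hfin hl2.le
  rw [sub_div] at this
  linarith
end
end
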